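/- arXiv:2504.08382 — 2 statements merged into one kernel-verified Lean document; each statement's English description precedes it below -/
import Mathlib

section
/- Fix a dimension d ≥ 1 and real numbers α and κ. Let η : ℝ^d → ℝ be twice continuously differentiable, let c : ℝ^d → ℝ^d be a continuously differentiable vector field, let δ : ℝ^d → ℝ be continuous, let w : ℝ^d → ℝ be continuously differentiable, and let v : ℝ^d → ℝ be continuously differentiable with compact support. Set ω := exp(−α·η), b := c − α·κ·∇η, and E := α·(∇η)·b − div b. Then ∫_{ℝ^d} [ κ·∇w·∇(ω·v) + (c·∇w)·ω·v + δ·w·ω·v ] dx = ∫_{ℝ^d} κ·ω·∇w·∇v dx + ∫_{ℝ^d} (δ + E)·ω·w·v dx − ∫_{ℝ^d} ω·w·(b·∇v) dx. -/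
open scoped RealInnerProductSpace
open MeasureTheory

/-- Divergence of a vector field on `ℝ^d`. -/
noncomputable def vdiv {d : ℕ} (F : EuclideanSpace ℝ (Fin d) → EuclideanSpace ℝ (Fin d))
    (x : EuclideanSpace ℝ (Fin d)) : ℝ :=
  ∑ i, fderiv ℝ F x (EuclideanSpace.single i 1) i

/-!
With the flux `G = ω c + κ ∇ω`, the product rule for `∇(ω v)` turns the diffusion and convection
terms into `κ ω ∇w·∇v + v (G·∇w)`, and integrating the second summand by parts moves the derivative
onto `v G`. For the exponential weight `∇ω = -α ω ∇η`, so `G = ω b` and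
`div G = ω (div b - α ∇η·b) = -ω E`.
-/

section Divergence

variable {V : Type*} [NormedAddCommGroup V] [NormedSpace ℝ V]

/-- The divergence of a vector field on a normed space, defined as the trace of its derivative so
that no basis or inner product has to be chosen; in infinite dimension it is `0` by
convention. -/
noncomputable def divergence (F : V → V) (x : V) : ℝ :=
  LinearMap.trace ℝ V (fderiv ℝ F x)

theorem vdiv_eq_divergence {d : ℕ} (F : EuclideanSpace ℝ (Fin d) → EuclideanSpace ℝ (Fin d)) :
    vdiv F = divergence F := by
  ext x
  simp [vdiv, divergence, EuclideanSpace.inner_single_left,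
    LinearMap.trace_eq_sum_inner _ (EuclideanSpace.basisFun (Fin d) ℝ)]

variable [FiniteDimensional ℝ V]

variable (V) in
/-- The trace as a continuous functional on endomorphisms, which can be interchanged with limits
and integrals. -/
noncomputable def traceCLM : (V →L[ℝ] V) →L[ℝ] ℝ :=
  (LinearMap.trace ℝ V ∘ₗ ContinuousLinearMap.coeLM ℝ).toContinuousLinearMap

theorem traceCLM_fderiv (F : V → V) (x : V) : traceCLM V (fderiv ℝ F x) = divergence F x := rfl

theorem divergence_fun_smul {f : V → ℝ} {F : V → V} {x : V}
    (hf : DifferentiableAt ℝ f x) (hF : DifferentiableAt ℝ F x) :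
    divergence (fun y => f y • F y) x = f x * divergence F x + fderiv ℝ f x (F x) := by
  simp [divergence, fderiv_fun_smul hf hF]

theorem continuous_divergence {F : V → V} (hF : ContDiff ℝ 1 F) : Continuous (divergence F) :=
  (traceCLM V).continuous.comp (hF.continuous_fderiv one_ne_zero)

variable [MeasurableSpace V] [BorelSpace V] {μ : Measure V} [μ.IsAddHaarMeasure]

theorem integral_fderiv_eq_zero {W : Type*} [NormedAddCommGroup W] [NormedSpace ℝ W]
    {F : V → W} (hF : Differentiable ℝ F) (hFi : Integrable F μ)
    (hF'i : Integrable (fderiv ℝ F) μ) :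
    ∫ x, fderiv ℝ F x ∂μ = 0 := by
  ext u
  rw [ContinuousLinearMap.integral_apply hF'i]
  simpa using integral_smul_fderiv_eq_neg_fderiv_smul_of_integrable (μ := μ)
    (f := fun _ => (1 : ℝ)) (v := u) (by simp) (by simpa using hF'i.apply_continuousLinearMap u)
    (by simpa using hFi) (by simp) (fun x _ => hF x)

theorem integral_divergence_eq_zero {F : V → V} (hF : Differentiable ℝ F)
    (hFi : Integrable F μ) (hF'i : Integrable (fderiv ℝ F) μ) :
    ∫ x, divergence F x ∂μ = 0 := by
  simp_rw [← traceCLM_fderiv, (traceCLM V).integral_comp_comm hF'i,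
    integral_fderiv_eq_zero hF hFi hF'i, map_zero]

theorem integral_fderiv_apply_eq_neg_integral_mul_divergence {f : V → ℝ} {F : V → V}
    (hf : ContDiff ℝ 1 f) (hF : ContDiff ℝ 1 F) (hFs : HasCompactSupport F) :
    ∫ x, fderiv ℝ f x (F x) ∂μ = -∫ x, f x * divergence F x ∂μ := by
  have hfF : ContDiff ℝ 1 (fun x => f x • F x) := hf.smul hF
  have hfFs : HasCompactSupport (fun x => f x • F x) := hFs.smul_left
  have hf' : Continuous (fderiv ℝ f) := hf.continuous_fderiv one_ne_zero
  have hdiv : Continuous (divergence F) := continuous_divergence hF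
  have hdivs : HasCompactSupport (divergence F) :=
    (hFs.fderiv ℝ).comp_left (map_zero (traceCLM V))
  have hf'F : Integrable (fun x => fderiv ℝ f x (F x)) μ :=
    (hf'.clm_apply hF.continuous).integrable_of_hasCompactSupport
      (hFs.mono fun x hx h => hx (by simp [h]))
  have hfdiv : Integrable (fun x => f x * divergence F x) μ :=
    (hf.continuous.mul hdiv).integrable_of_hasCompactSupport hdivs.mul_left
  have hzero : ∫ x, divergence (fun y => f y • F y) x ∂μ = 0 :=
    integral_divergence_eq_zero (hfF.differentiable one_ne_zero)
      (hfF.continuous.integrable_of_hasCompactSupport hfFs)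
      ((hfF.continuous_fderiv one_ne_zero).integrable_of_hasCompactSupport (hfFs.fderiv ℝ))
  have hproduct (x : V) :
      divergence (fun y => f y • F y) x = f x * divergence F x + fderiv ℝ f x (F x) :=
    divergence_fun_smul (hf.differentiable one_ne_zero x) (hF.differentiable one_ne_zero x)
  simp_rw [hproduct] at hzero
  rw [integral_add hfdiv hf'F] at hzero
  linarith

theorem integral_mul_fderiv_apply_eq {f g : V → ℝ} {F : V → V} (hf : ContDiff ℝ 1 f)
    (hg : ContDiff ℝ 1 g) (hgs : HasCompactSupport g) (hF : ContDiff ℝ 1 F) :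
    ∫ x, g x * fderiv ℝ f x (F x) ∂μ =
      -(∫ x, f x * g x * divergence F x ∂μ) - ∫ x, f x * fderiv ℝ g x (F x) ∂μ := by
  have hdiv : Continuous (divergence F) := continuous_divergence hF
  have hg' : Continuous (fderiv ℝ g) := hg.continuous_fderiv one_ne_zero
  have hfgdiv : Integrable (fun x => f x * g x * divergence F x) μ :=
    ((hf.continuous.mul hg.continuous).mul hdiv).integrable_of_hasCompactSupport
      hgs.mul_left.mul_right
  have hfg'F : Integrable (fun x => f x * fderiv ℝ g x (F x)) μ :=
    (hf.continuous.mul (hg'.clm_apply hF.continuous)).integrable_of_hasCompactSupport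
      ((hgs.fderiv ℝ).mono fun x hx h => hx (by simp [h]))
  calc ∫ x, g x * fderiv ℝ f x (F x) ∂μ
      = ∫ x, fderiv ℝ f x (g x • F x) ∂μ := by simp only [map_smul, smul_eq_mul]
    _ = -∫ x, f x * divergence (fun y => g y • F y) x ∂μ :=
        integral_fderiv_apply_eq_neg_integral_mul_divergence hf (hg.smul hF) hgs.smul_right
    _ = -∫ x, (f x * g x * divergence F x + f x * fderiv ℝ g x (F x)) ∂μ := by
        congr! 3 with x
        rw [divergence_fun_smul (hg.differentiable one_ne_zero x)
          (hF.differentiable one_ne_zero x)]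
        ring
    _ = -(∫ x, f x * g x * divergence F x ∂μ) - ∫ x, f x * fderiv ℝ g x (F x) ∂μ := by
        rw [integral_add hfgdiv hfg'F]
        ring

end Divergence

section Gradient

variable {V : Type*} [NormedAddCommGroup V] [InnerProductSpace ℝ V] [CompleteSpace V]

theorem gradient_fun_mul {f g : V → ℝ} {x : V}
    (hf : DifferentiableAt ℝ f x) (hg : DifferentiableAt ℝ g x) :
    gradient (fun y => f y * g y) x = f x • gradient g x + g x • gradient f x := by
  simp [gradient, fderiv_fun_mul hf hg]

theorem gradient_exp_neg_const_mul {f : V → ℝ} {x : V} (a : ℝ) (hf : DifferentiableAt ℝ f x) :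
    gradient (fun y => Real.exp (-(a * f y))) x =
      -(a * Real.exp (-(a * f x))) • gradient f x := by
  have h := (hf.hasFDerivAt.const_mul a).fun_neg.exp.fderiv
  simp [gradient, h, smul_smul, mul_comm]

theorem contDiff_gradient {n : WithTop ℕ∞} {f : V → ℝ} (hf : ContDiff ℝ (n + 1) f) :
    ContDiff ℝ n (gradient f) :=
  (InnerProductSpace.toDual ℝ V).symm.contDiff.comp (hf.fderiv_right le_rfl)

theorem continuous_gradient {f : V → ℝ} (hf : ContDiff ℝ 1 f) : Continuous (gradient f) :=
  (contDiff_gradient (n := 0) (by simpa using hf)).continuous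

theorem hasCompactSupport_gradient {f : V → ℝ} (hf : HasCompactSupport f) :
    HasCompactSupport (gradient f) :=
  (hf.fderiv ℝ).comp_left (g := (InnerProductSpace.toDual ℝ V).symm) (map_zero _)

/-- The flux `ω c + κ ∇ω`: the field along which `∇w` is tested against `v` once the weight in
`κ ∇w·∇(ω v) + (c·∇w) ω v` has been differentiated. -/
noncomputable def weightedFlux (κ ω : V → ℝ) (c : V → V) (x : V) : V :=
  ω x • c x + κ x • gradient ω x

theorem weightedFlux_exp_neg (α : ℝ) (κ : V → ℝ) {η : V → ℝ} (hη : Differentiable ℝ η) (c : V → V) :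
    weightedFlux κ (fun x => Real.exp (-(α * η x))) c =
      fun x => Real.exp (-(α * η x)) • (c x - (α * κ x) • gradient η x) := by
  ext1 x
  rw [weightedFlux, gradient_exp_neg_const_mul α (hη x)]
  module

theorem diffusion_add_convection_eq_weightedFlux {κ ω v w : V → ℝ} {x : V} (c : V → V)
    (hω : DifferentiableAt ℝ ω x) (hv : DifferentiableAt ℝ v x) :
    κ x * ⟪gradient w x, gradient (fun y => ω y * v y) x⟫ + ⟪c x, gradient w x⟫ * (ω x * v x) =
      κ x * ω x * ⟪gradient w x, gradient v x⟫ + v x * fderiv ℝ w x (weightedFlux κ ω c x) := by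
  rw [gradient_fun_mul hω hv, ← inner_gradient_left, weightedFlux, real_inner_comm (gradient w x)]
  simp only [inner_add_right, inner_smul_right]
  ring

end Gradient

section BilinearForm

variable {V : Type*} [NormedAddCommGroup V] [InnerProductSpace ℝ V] [FiniteDimensional ℝ V]

theorem divergence_exp_neg_smul (α : ℝ) {η : V → ℝ} {b : V → V} {x : V}
    (hη : DifferentiableAt ℝ η x) (hb : DifferentiableAt ℝ b x) :
    divergence (fun y => Real.exp (-(α * η y)) • b y) x =
      -(Real.exp (-(α * η x)) * (α * ⟪gradient η x, b x⟫ - divergence b x)) := by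
  have hω : DifferentiableAt ℝ (fun y => Real.exp (-(α * η y))) x := by fun_prop
  rw [divergence_fun_smul hω hb, ← inner_gradient_left, gradient_exp_neg_const_mul α hη,
    real_inner_smul_left]
  ring

variable [MeasurableSpace V] [BorelSpace V] {μ : Measure V} [μ.IsAddHaarMeasure]

theorem integral_weighted_convection_diffusion_reaction {κ ω δ v w : V → ℝ} {c : V → V}
    (hκ : Continuous κ) (hω : ContDiff ℝ 1 ω) (hδ : LocallyIntegrable δ μ)
    (hw : ContDiff ℝ 1 w) (hv : ContDiff ℝ 1 v) (hvs : HasCompactSupport v)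
    (hG : ContDiff ℝ 1 (weightedFlux κ ω c)) :
    ∫ x, (κ x * ⟪gradient w x, gradient (fun y => ω y * v y) x⟫ +
        ⟪c x, gradient w x⟫ * (ω x * v x) + δ x * w x * ω x * v x) ∂μ =
      (∫ x, κ x * ω x * ⟪gradient w x, gradient v x⟫ ∂μ) +
        (∫ x, (δ x * ω x - divergence (weightedFlux κ ω c) x) * w x * v x ∂μ) -
        ∫ x, w x * ⟪weightedFlux κ ω c x, gradient v x⟫ ∂μ := by
  have hdiffusion : Integrable (fun x => κ x * ω x * ⟪gradient w x, gradient v x⟫) μ :=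
    ((hκ.mul hω.continuous).mul ((continuous_gradient hw).inner
      (continuous_gradient hv))).integrable_of_hasCompactSupport
        ((hasCompactSupport_gradient hvs).mono fun x hx h => hx
          (by simp only [Pi.mul_apply, h, inner_zero_right, mul_zero]))
  have hreaction : Integrable (fun x => δ x * (ω x * w x * v x)) μ :=
    hδ.integrable_smul_right_of_hasCompactSupport
      ((hω.continuous.mul hw.continuous).mul hv.continuous) hvs.mul_left
  have hconvection : Integrable (fun x => v x * fderiv ℝ w x (weightedFlux κ ω c x)) μ :=
    (hv.continuous.mul ((hw.continuous_fderiv one_ne_zero).clm_apply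
      hG.continuous)).integrable_of_hasCompactSupport hvs.mul_right
  have hdivergence : Integrable (fun x => w x * v x * divergence (weightedFlux κ ω c) x) μ :=
    ((hw.continuous.mul hv.continuous).mul
      (continuous_divergence hG)).integrable_of_hasCompactSupport hvs.mul_left.mul_right
  have hlhs (x : V) : κ x * ⟪gradient w x, gradient (fun y => ω y * v y) x⟫ +
      ⟪c x, gradient w x⟫ * (ω x * v x) + δ x * w x * ω x * v x =
      κ x * ω x * ⟪gradient w x, gradient v x⟫ + v x * fderiv ℝ w x (weightedFlux κ ω c x) +
        δ x * (ω x * w x * v x) := by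
    rw [diffusion_add_convection_eq_weightedFlux c (hω.differentiable one_ne_zero x)
      (hv.differentiable one_ne_zero x)]
    ring
  have hrhs (x : V) : (δ x * ω x - divergence (weightedFlux κ ω c) x) * w x * v x =
      δ x * (ω x * w x * v x) - w x * v x * divergence (weightedFlux κ ω c) x := by
    ring
  simp_rw [hlhs, hrhs]
  rw [integral_add (hdiffusion.fun_add hconvection) hreaction,
    integral_add hdiffusion hconvection, integral_sub hreaction hdivergence,
    integral_mul_fderiv_apply_eq hw hv hvs hG]
  simp only [inner_gradient_right, conj_trivial]
  ring

theorem stmt4_general (α : ℝ) (κ : V → ℝ) (hκ : ContDiff ℝ 1 κ)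
    (η : V → ℝ) (hη : ContDiff ℝ 2 η) (c : V → V) (hc : ContDiff ℝ 1 c)
    (δ : V → ℝ) (hδ : LocallyIntegrable δ μ) (w : V → ℝ) (hw : ContDiff ℝ 1 w)
    (v : V → ℝ) (hv : ContDiff ℝ 1 v) (hvsupp : HasCompactSupport v)
    (ω : V → ℝ) (hω : ω = fun x => Real.exp (-(α * η x)))
    (b : V → V) (hb : b = fun x => c x - (α * κ x) • gradient η x)
    (E : V → ℝ) (hE : E = fun x => α * ⟪gradient η x, b x⟫ - divergence b x) :
    ∫ x, (κ x * ⟪gradient w x, gradient (fun y => ω y * v y) x⟫ +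
        ⟪c x, gradient w x⟫ * (ω x * v x) + δ x * w x * ω x * v x) ∂μ =
      (∫ x, κ x * ω x * ⟪gradient w x, gradient v x⟫ ∂μ) +
        (∫ x, (δ x + E x) * ω x * w x * v x ∂μ) -
        ∫ x, ω x * w x * ⟪b x, gradient v x⟫ ∂μ := by
  have hη1 : ContDiff ℝ 1 η := hη.of_le one_le_two
  have hηd : Differentiable ℝ η := hη1.differentiable one_ne_zero
  have hω1 : ContDiff ℝ 1 ω := by rw [hω]; fun_prop
  have hb1 : ContDiff ℝ 1 b := by
    have hη' : ContDiff ℝ 1 (gradient η) := contDiff_gradient (by simpa [one_add_one_eq_two])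
    rw [hb]; fun_prop
  have hflux : weightedFlux κ ω c = fun x => ω x • b x := by
    rw [hω, weightedFlux_exp_neg α κ hηd, hb]
  have hdiv (x : V) : divergence (fun y => ω y • b y) x = -(ω x * E x) := by
    rw [hω, divergence_exp_neg_smul α (hηd x) (hb1.differentiable one_ne_zero x), hE]
  have hreaction (x : V) : (δ x * ω x - divergence (fun y => ω y • b y) x) * w x * v x =
      (δ x + E x) * ω x * w x * v x := by
    rw [hdiv]
    ring
  have hconvection (x : V) :
      w x * ⟪ω x • b x, gradient v x⟫ = ω x * w x * ⟪b x, gradient v x⟫ := by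
    rw [real_inner_smul_left]
    ring
  rw [integral_weighted_convection_diffusion_reaction hκ.continuous hω1 hδ hw hv hvsupp
    (hflux ▸ hω1.smul hb1), hflux]
  simp only [hreaction, hconvection]

end BilinearForm

/-- Equation (24) of the paper, in its interior form: the weighted
convection–diffusion–reaction bilinear form rewritten in terms of the full
effective reaction `M = δ + E` and the fitted convective term. -/
theorem stmt4 {d : ℕ} (hd : 1 ≤ d) (α κ : ℝ)
    (η : EuclideanSpace ℝ (Fin d) → ℝ) (hη : ContDiff ℝ 2 η)
    (c : EuclideanSpace ℝ (Fin d) → EuclideanSpace ℝ (Fin d)) (hc : ContDiff ℝ 1 c)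
    (δ : EuclideanSpace ℝ (Fin d) → ℝ) (hδ : Continuous δ)
    (w : EuclideanSpace ℝ (Fin d) → ℝ) (hw : ContDiff ℝ 1 w)
    (v : EuclideanSpace ℝ (Fin d) → ℝ) (hv : ContDiff ℝ 1 v)
    (hvsupp : HasCompactSupport v)
    (ω : EuclideanSpace ℝ (Fin d) → ℝ) (hω : ω = fun x => Real.exp (-(α * η x)))
    (b : EuclideanSpace ℝ (Fin d) → EuclideanSpace ℝ (Fin d))
    (hb : b = fun x => c x - (α * κ) • gradient η x)
    (E : EuclideanSpace ℝ (Fin d) → ℝ)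
    (hE : E = fun x => α * ⟪gradient η x, b x⟫ - vdiv b x) :
    (∫ x : EuclideanSpace ℝ (Fin d),
        (κ * ⟪gradient w x, gradient (fun y => ω y * v y) x⟫ +
          ⟪c x, gradient w x⟫ * (ω x * v x) + δ x * w x * ω x * v x)) =
      (∫ x : EuclideanSpace ℝ (Fin d), κ * ω x * ⟪gradient w x, gradient v x⟫) +
        (∫ x : EuclideanSpace ℝ (Fin d), (δ x + E x) * ω x * w x * v x) -
        ∫ x : EuclideanSpace ℝ (Fin d), ω x * w x * ⟪b x, gradient v x⟫ := by
  rw [vdiv_eq_divergence] at hE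
  exact stmt4_general α (fun _ => κ) contDiff_const η hη c hc δ hδ.locallyIntegrable w hw v hv
    hvsupp ω hω b hb E hE
end

section
/- Fix a dimension d ≥ 1 and real numbers α and κ > 0. Let η : ℝ^d → ℝ be twice continuously differentiable, let c : ℝ^d → ℝ^d be a continuously differentiable vector field, and let δ : ℝ^d → ℝ be continuous with δ(x) ≥ max{0, −2·E(x)} for all x, where ω := exp(−α·η), b := c − α·κ·∇η, E := α·(∇η)·b − div b, and L := δ + E/2. For a continuously differentiable compactly supported u : ℝ^d → ℝ define the weighted energy norm ‖u‖_ω := ( ∫_{ℝ^d} κ·ω·|∇u|² dx + ∫_{ℝ^d} L·ω·u² dx )^{1/2}, and for a continuously differentiable compactly supported w define the dual seminorm s(w) := sup over continuously differentiable compactly supported φ with ‖φ‖_ω ≠ 0 of ( −∫_{ℝ^d} ω·w·(b·∇φ) dx ) / ‖φ‖_ω. Then, provided s(w) < ∞, for all continuously differentiable compactly supported w, v : ℝ^d → ℝ one has ∫_{ℝ^d} [ κ·∇w·∇(ω·v) + (c·∇w)·ω·v + δ·w·ω·v ] dx ≤ 3·( ‖w‖_ω + s(w) )·‖v‖_ω.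 -/
open scoped RealInnerProductSpace
open MeasureTheory

/-!
Write `F = ω b = ω c + κ ∇ω` for the weighted flux. The product rule for `∇(ω v)` turns the
convective terms of `a_reac(w, ω v)` into `∫ v F · ∇w`, and one integration by parts moves the
derivative onto `v`:
`a_reac(w, ω v) = ∫ κ ω ∇w · ∇v + ∫ (δ ω - div F) w v - ∫ w F · ∇v`.
For `ω = exp (-α η)` one has `div F = -ω E`, so Cauchy–Schwarz and `|δ + E| ≤ 2 L` bound the first
two integrals by `2 ‖w‖_ω ‖v‖_ω`. The last one is at most `s(w) ‖v‖_ω` by definition of `s`,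
also when `‖v‖_ω = 0`, since then `∇v = 0`.
-/

section Gradient

variable {E : Type*} [NormedAddCommGroup E] [InnerProductSpace ℝ E] [CompleteSpace E]

lemma contDiff_gradient_s10 {m n : WithTop ℕ∞} {u : E → ℝ} (hu : ContDiff ℝ n u) (hmn : m + 1 ≤ n) :
    ContDiff ℝ m (gradient u) :=
  (InnerProductSpace.toDual ℝ E).symm.contDiff.comp (hu.fderiv_right hmn)

lemma continuous_gradient_s10 {u : E → ℝ} (hu : ContDiff ℝ 1 u) : Continuous (gradient u) :=
  (contDiff_gradient_s10 (m := 0) hu (zero_add _).le).continuous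

lemma gradient_fun_mul_s10 {u v : E → ℝ} {x : E} (hu : DifferentiableAt ℝ u x)
    (hv : DifferentiableAt ℝ v x) :
    gradient (fun y => u y * v y) x = u x • gradient v x + v x • gradient u x := by
  simp [gradient, fderiv_fun_mul hu hv]

lemma gradient_neg (u : E → ℝ) (x : E) : gradient (-u) x = -gradient u x := by
  simp [gradient, fderiv_neg]

lemma gradient_exp_neg_mul {η : E → ℝ} {x : E} (α : ℝ) (hη : DifferentiableAt ℝ η x) :
    gradient (fun y => Real.exp (-(α * η y))) x
      = -(α * Real.exp (-(α * η x))) • gradient η x := by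
  have h : HasFDerivAt (fun y => Real.exp (-(α * η y)))
      (Real.exp (-(α * η x)) • -(α • fderiv ℝ η x)) x :=
    (hη.hasFDerivAt.const_mul α).neg.exp
  simp [gradient, h.fderiv, smul_smul, mul_comm]

lemma gradient_eq_zero_of_notMem_tsupport {u : E → ℝ} {x : E} (hx : x ∉ tsupport u) :
    gradient u x = 0 := by
  simp [gradient, fderiv_of_notMem_tsupport ℝ hx]

lemma integrable_of_eq_zero_of_gradient_eq_zero [MeasurableSpace E] [OpensMeasurableSpace E]
    {μ : Measure E} [IsFiniteMeasureOnCompacts μ] {u f : E → ℝ} (hu : HasCompactSupport u)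
    (hf : Continuous f) (h : ∀ x, u x = 0 → gradient u x = 0 → f x = 0) : Integrable f μ :=
  hf.integrable_of_hasCompactSupport <| HasCompactSupport.intro hu fun x hx =>
    h x (image_eq_zero_of_notMem_tsupport hx) (gradient_eq_zero_of_notMem_tsupport hx)

end Gradient

section Divergence

variable {d : ℕ} {F : EuclideanSpace ℝ (Fin d) → EuclideanSpace ℝ (Fin d)}

lemma fderiv_euclidean_apply {x : EuclideanSpace ℝ (Fin d)} (hF : DifferentiableAt ℝ F x)
    (y : EuclideanSpace ℝ (Fin d)) (i : Fin d) :
    fderiv ℝ (fun z => F z i) x y = fderiv ℝ F x y i := by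
  have h : HasFDerivAt (fun z => F z i) _ x :=
    (EuclideanSpace.proj (𝕜 := ℝ) i).hasFDerivAt.comp x hF.hasFDerivAt
  rw [h.fderiv]
  rfl

lemma inner_gradient_eq_sum (f : EuclideanSpace ℝ (Fin d) → ℝ) (x y : EuclideanSpace ℝ (Fin d)) :
    ⟪y, gradient f x⟫ = ∑ i, fderiv ℝ f x (EuclideanSpace.single i 1) * y i := by
  simp only [← inner_gradient_left, PiLp.inner_apply (gradient f x), PiLp.inner_apply y]
  simp [mul_comm]

lemma continuous_vdiv (hF : ContDiff ℝ 1 F) : Continuous (vdiv F) := by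
  have := hF.continuous_fderiv one_ne_zero
  unfold vdiv
  fun_prop

lemma vdiv_fun_smul {f : EuclideanSpace ℝ (Fin d) → ℝ} {x : EuclideanSpace ℝ (Fin d)}
    (hf : DifferentiableAt ℝ f x) (hF : DifferentiableAt ℝ F x) :
    vdiv (fun y => f y • F y) x = f x * vdiv F x + ⟪F x, gradient f x⟫ := by
  rw [inner_gradient_eq_sum]
  simp [vdiv, fderiv_fun_smul hf hF, Finset.sum_add_distrib, Finset.mul_sum]

theorem integral_mul_vdiv_eq_neg_integral_inner_gradient {f : EuclideanSpace ℝ (Fin d) → ℝ}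
    (hf : ContDiff ℝ 1 f) (hfc : HasCompactSupport f) (hF : ContDiff ℝ 1 F) :
    ∫ x, f x * vdiv F x = -∫ x, ⟪F x, gradient f x⟫ := by
  have hFi (i : Fin d) : ContDiff ℝ 1 (fun y => F y i) := by fun_prop
  have : Continuous (fderiv ℝ f) := hf.continuous_fderiv one_ne_zero
  have (i : Fin d) : Continuous (fderiv ℝ (fun y => F y i)) :=
    (hFi i).continuous_fderiv one_ne_zero
  have int_left (i : Fin d) :
      Integrable fun x => f x * fderiv ℝ (fun y => F y i) x (EuclideanSpace.single i 1) :=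
    integrable_of_eq_zero_of_gradient_eq_zero hfc (by have := hf.continuous; fun_prop)
      fun x hx _ => by simp [hx]
  have int_right (i : Fin d) :
      Integrable fun x => fderiv ℝ f x (EuclideanSpace.single i 1) * F x i :=
    integrable_of_eq_zero_of_gradient_eq_zero hfc (by fun_prop)
      fun x _ hx => by simp [← inner_gradient_left, hx]
  have coordinate (i : Fin d) :
      ∫ x, f x * fderiv ℝ (fun y => F y i) x (EuclideanSpace.single i 1)
        = -∫ x, fderiv ℝ f x (EuclideanSpace.single i 1) * F x i :=
    integral_mul_fderiv_eq_neg_fderiv_mul_of_integrable (int_right i) (int_left i)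
      (integrable_of_eq_zero_of_gradient_eq_zero hfc
        (hf.continuous.mul (hFi i).continuous) fun x hx _ => by simp [hx])
      (fun x _ => hf.differentiable one_ne_zero x)
      (fun x _ => (hFi i).differentiable one_ne_zero x)
  simp_rw [vdiv, Finset.mul_sum, ← fderiv_euclidean_apply (hF.differentiable one_ne_zero _),
    inner_gradient_eq_sum]
  rw [integral_finsetSum _ fun i _ => int_left i, integral_finsetSum _ fun i _ => int_right i,
    ← Finset.sum_neg_distrib]
  exact Finset.sum_congr rfl fun i _ => coordinate i

theorem integral_mul_inner_gradient_eq_neg {w v : EuclideanSpace ℝ (Fin d) → ℝ}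
    (hw : ContDiff ℝ 1 w) (hwc : HasCompactSupport w) (hv : ContDiff ℝ 1 v)
    (hF : ContDiff ℝ 1 F) :
    ∫ x, v x * ⟪F x, gradient w x⟫
      = -(∫ x, vdiv F x * (w x * v x)) - ∫ x, w x * ⟪F x, gradient v x⟫ := by
  have hwC := hw.continuous
  have hvC := hv.continuous
  have hFC := hF.continuous
  have hgw := continuous_gradient_s10 hw
  have hgv := continuous_gradient_s10 hv
  have int_w : Integrable fun x => w x * ⟪F x, gradient v x⟫ :=
    integrable_of_eq_zero_of_gradient_eq_zero hwc (by fun_prop) fun x hx _ => by simp [hx]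
  have int_v : Integrable fun x => v x * ⟪F x, gradient w x⟫ :=
    integrable_of_eq_zero_of_gradient_eq_zero hwc (by fun_prop) fun x _ hx => by simp [hx]
  have parts := integral_mul_vdiv_eq_neg_integral_inner_gradient (f := fun y => w y * v y)
    (hw.mul hv) hwc.mul_right hF
  have product_rule (x : EuclideanSpace ℝ (Fin d)) :
      ⟪F x, gradient (fun y => w y * v y) x⟫
        = w x * ⟪F x, gradient v x⟫ + v x * ⟪F x, gradient w x⟫ := by
    rw [gradient_fun_mul_s10 (hw.differentiable one_ne_zero x) (hv.differentiable one_ne_zero x),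
      inner_add_right, real_inner_smul_right, real_inner_smul_right]
  simp_rw [product_rule, mul_comm _ (vdiv F _)] at parts
  rw [integral_add int_w int_v] at parts
  linarith

end Divergence

section CauchySchwarz

lemma integral_le_sqrt_mul_sqrt_of_sq_le_mul {X : Type*} [MeasurableSpace X] {μ : Measure X}
    {f p q : X → ℝ} (hp : Integrable p μ) (hq : Integrable q μ) (hp0 : ∀ x, 0 ≤ p x)
    (hq0 : ∀ x, 0 ≤ q x) (hf : ∀ x, f x ^ 2 ≤ p x * q x) :
    ∫ x, f x ∂μ ≤ √(∫ x, p x ∂μ) * √(∫ x, q x ∂μ) := by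
  have memLp_sqrt {g : X → ℝ} (hg : Integrable g μ) (hg0 : ∀ x, 0 ≤ g x) :
      MemLp (fun x => √(g x)) 2 μ :=
    (memLp_two_iff_integrable_sq (Real.continuous_sqrt.comp_aestronglyMeasurable hg.1)).2 <| by
      simpa only [Real.sq_sqrt (hg0 _)] using hg
  have hsp := memLp_sqrt hp hp0
  have hsq := memLp_sqrt hq hq0
  have pointwise (x : X) : |f x| ≤ √(p x) * √(q x) := by
    rw [← Real.sqrt_mul (hp0 x)]
    exact Real.abs_le_sqrt (hf x)
  calc ∫ x, f x ∂μ ≤ ∫ x, |f x| ∂μ := (le_abs_self _).trans abs_integral_le_integral_abs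
    _ ≤ ∫ x, √(p x) * √(q x) ∂μ :=
      integral_mono_of_nonneg (.of_forall fun x => abs_nonneg _) (hsp.integrable_mul hsq)
        (.of_forall pointwise)
    _ ≤ (∫ x, √(p x) ^ (2 : ℝ) ∂μ) ^ (1 / (2 : ℝ)) *
        (∫ x, √(q x) ^ (2 : ℝ) ∂μ) ^ (1 / (2 : ℝ)) :=
      integral_mul_le_Lp_mul_Lq_of_nonneg .two_two (.of_forall fun x => Real.sqrt_nonneg _)
        (.of_forall fun x => Real.sqrt_nonneg _) (by simpa using hsp) (by simpa using hsq)
    _ = √(∫ x, p x ∂μ) * √(∫ x, q x ∂μ) := by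
      simp only [Real.rpow_two, Real.sq_sqrt (hp0 _), Real.sq_sqrt (hq0 _), ← Real.sqrt_eq_rpow]

lemma sq_mul_inner_add_mul_le {E : Type*} [NormedAddCommGroup E] [InnerProductSpace ℝ E]
    {k a m l : ℝ} (hk : |k| ≤ a) (hm : |m| ≤ l) (x y : E) (s t : ℝ) :
    (k * ⟪x, y⟫ + m * (s * t)) ^ 2
      ≤ (a * ‖x‖ ^ 2 + l * s ^ 2) * (a * ‖y‖ ^ 2 + l * t ^ 2) := by
  have ha : 0 ≤ a := (abs_nonneg k).trans hk
  have hl : 0 ≤ l := (abs_nonneg m).trans hm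
  have triangle : |k * ⟪x, y⟫ + m * (s * t)| ≤ a * (‖x‖ * ‖y‖) + l * (|s| * |t|) := by
    refine (abs_add_le _ _).trans ?_
    rw [abs_mul, abs_mul, abs_mul s]
    gcongr
    exact abs_real_inner_le_norm x y
  calc (k * ⟪x, y⟫ + m * (s * t)) ^ 2
      ≤ (a * (‖x‖ * ‖y‖) + l * (|s| * |t|)) ^ 2 :=
      sq_le_sq' (abs_le.1 triangle).1 (abs_le.1 triangle).2
    _ ≤ (a * ‖x‖ ^ 2 + l * |s| ^ 2) * (a * ‖y‖ ^ 2 + l * |t| ^ 2) := by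
      linarith [mul_nonneg (mul_nonneg ha hl) (sq_nonneg (‖x‖ * |t| - ‖y‖ * |s|))]
    _ = (a * ‖x‖ ^ 2 + l * s ^ 2) * (a * ‖y‖ ^ 2 + l * t ^ 2) := by simp only [sq_abs]

end CauchySchwarz

section DualSeminorm

variable {E : Type*} [NormedAddCommGroup E] [NormedSpace ℝ E] {N ℓ : (E → ℝ) → ℝ}

/-- The quotients `ℓ φ / N φ` over the `C¹` compactly supported `φ` with `N φ ≠ 0`, whose
supremum is the dual seminorm of the functional `ℓ` with respect to `N`. -/
def testQuotients (N ℓ : (E → ℝ) → ℝ) : Set ℝ :=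
  {r : ℝ | ∃ φ : E → ℝ, ContDiff ℝ 1 φ ∧ HasCompactSupport φ ∧ N φ ≠ 0 ∧ r = ℓ φ / N φ}

/-- The dual seminorm of the functional `ℓ` with respect to `N`, tested against `C¹` compactly
supported functions. It is a real supremum, hence `0` if `testQuotients N ℓ` is unbounded. -/
noncomputable def dualSeminorm (N ℓ : (E → ℝ) → ℝ) : ℝ :=
  sSup (testQuotients N ℓ)

lemma neg_mem_testQuotients (hN : N.Even) (hℓ : ℓ.Odd) {r : ℝ} (hr : r ∈ testQuotients N ℓ) :
    -r ∈ testQuotients N ℓ := by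
  obtain ⟨φ, hφ, hφc, hφ0, rfl⟩ := hr
  exact ⟨-φ, hφ.neg, hφc.neg, by rwa [hN], by rw [hN, hℓ, neg_div]⟩

lemma dualSeminorm_nonneg (hN : N.Even) (hℓ : ℓ.Odd) : 0 ≤ dualSeminorm N ℓ := by
  rcases (testQuotients N ℓ).eq_empty_or_nonempty with hS | ⟨r, hr⟩
  · simp [dualSeminorm, hS]
  · refine Real.sSup_nonneg' ?_
    rcases le_total 0 r with hr0 | hr0
    · exact ⟨r, hr, hr0⟩
    · exact ⟨-r, neg_mem_testQuotients hN hℓ hr, neg_nonneg.2 hr0⟩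

lemma le_dualSeminorm_mul (hS : BddAbove (testQuotients N ℓ)) {φ : E → ℝ} (hφ : ContDiff ℝ 1 φ)
    (hφc : HasCompactSupport φ) (hN : 0 ≤ N φ) (hℓ : N φ = 0 → ℓ φ = 0) :
    ℓ φ ≤ dualSeminorm N ℓ * N φ := by
  rcases hN.eq_or_lt' with hφ0 | hpos
  · rw [hℓ hφ0, hφ0, mul_zero]
  · exact (div_le_iff₀ hpos).1 (le_csSup hS ⟨φ, hφ, hφc, hpos.ne', rfl⟩)

end DualSeminorm

section WeightedEnergy

variable {E : Type*} [NormedAddCommGroup E] [InnerProductSpace ℝ E] [CompleteSpace E]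
  [MeasurableSpace E]

/-- The weighted energy norm `‖u‖_ω = (∫ κ ω |∇u|² + ∫ L ω u²)^{1/2}`. -/
noncomputable def weightedEnergyNorm (μ : Measure E) (κ : ℝ) (ω L u : E → ℝ) : ℝ :=
  √((∫ x, κ * ω x * ‖gradient u x‖ ^ 2 ∂μ) + ∫ x, L x * ω x * u x ^ 2 ∂μ)

/-- The functional `φ ↦ -∫ ω w b · ∇φ`, the weighted convective term `b w` as an element of the
dual space; its dual seminorm with respect to `‖·‖_ω` is the `s(w)` of the estimate. -/
noncomputable def convectionFunctional (μ : Measure E) (ω : E → ℝ) (b : E → E) (w φ : E → ℝ) : ℝ :=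
  -∫ x, ω x * w x * ⟪b x, gradient φ x⟫ ∂μ

/-- The convection-diffusion-reaction form `a_reac(w, z) = ∫ κ ∇w · ∇z + (c · ∇w) z + δ w z`. -/
noncomputable def reactionForm (μ : Measure E) (κ : ℝ) (c : E → E) (δ w z : E → ℝ) : ℝ :=
  ∫ x, (κ * ⟪gradient w x, gradient z x⟫ + ⟪c x, gradient w x⟫ * z x + δ x * w x * z x) ∂μ

variable {μ : Measure E} {κ : ℝ} {ω L : E → ℝ}

lemma weightedEnergyNorm_nonneg (u : E → ℝ) : 0 ≤ weightedEnergyNorm μ κ ω L u :=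
  Real.sqrt_nonneg _

lemma even_weightedEnergyNorm : (weightedEnergyNorm μ κ ω L).Even := fun u => by
  simp [weightedEnergyNorm, gradient_neg]

lemma odd_convectionFunctional (b : E → E) (w : E → ℝ) :
    (convectionFunctional μ ω b w).Odd := fun φ => by
  simp [convectionFunctional, gradient_neg, integral_neg]

variable [OpensMeasurableSpace E] [IsFiniteMeasureOnCompacts μ]

lemma integrable_mul_norm_gradient_sq (hω : Continuous ω) {u : E → ℝ} (hu : ContDiff ℝ 1 u)
    (huc : HasCompactSupport u) : Integrable (fun x => κ * ω x * ‖gradient u x‖ ^ 2) μ :=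
  integrable_of_eq_zero_of_gradient_eq_zero huc (by have := continuous_gradient_s10 hu; fun_prop)
    fun x _ hx => by simp [hx]

lemma integrable_mul_sq (hω : Continuous ω) (hL : Continuous L) {u : E → ℝ} (hu : Continuous u)
    (huc : HasCompactSupport u) : Integrable (fun x => L x * ω x * u x ^ 2) μ :=
  integrable_of_eq_zero_of_gradient_eq_zero huc (by fun_prop) fun x hx _ => by simp [hx]

lemma gradient_eq_zero_of_weightedEnergyNorm_eq_zero [μ.IsOpenPosMeasure] (hκ : 0 < κ)
    (hω : Continuous ω) (hω0 : ∀ x, 0 < ω x) (hL0 : ∀ x, 0 ≤ L x) {u : E → ℝ}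
    (hu : ContDiff ℝ 1 u) (huc : HasCompactSupport u)
    (h : weightedEnergyNorm μ κ ω L u = 0) (x : E) : gradient u x = 0 := by
  have hgu := continuous_gradient_s10 hu
  have diffusion_nonneg : 0 ≤ fun x => κ * ω x * ‖gradient u x‖ ^ 2 := fun x =>
    mul_nonneg (mul_nonneg hκ.le (hω0 x).le) (sq_nonneg _)
  have integral_eq_zero : ∫ x, κ * ω x * ‖gradient u x‖ ^ 2 ∂μ = 0 := by
    have reaction_integral_nonneg : 0 ≤ ∫ x, L x * ω x * u x ^ 2 ∂μ :=
      integral_nonneg fun x => mul_nonneg (mul_nonneg (hL0 x) (hω0 x).le) (sq_nonneg _)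
    linarith [Real.sqrt_eq_zero'.1 h, integral_nonneg (μ := μ) diffusion_nonneg]
  rw [integral_eq_zero_iff_of_nonneg diffusion_nonneg
    (integrable_mul_norm_gradient_sq hω hu huc)] at integral_eq_zero
  have := congrFun
    ((Continuous.ae_eq_iff_eq μ (by fun_prop) continuous_zero).1 integral_eq_zero) x
  simpa [hκ.ne', (hω0 x).ne'] using this

lemma convectionFunctional_le [μ.IsOpenPosMeasure] (hκ : 0 < κ) (hω : Continuous ω)
    (hω0 : ∀ x, 0 < ω x) (hL0 : ∀ x, 0 ≤ L x) {b : E → E} {w : E → ℝ}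
    (hS : BddAbove (testQuotients (weightedEnergyNorm μ κ ω L) (convectionFunctional μ ω b w)))
    {v : E → ℝ} (hv : ContDiff ℝ 1 v) (hvc : HasCompactSupport v) :
    convectionFunctional μ ω b w v
      ≤ dualSeminorm (weightedEnergyNorm μ κ ω L) (convectionFunctional μ ω b w) *
        weightedEnergyNorm μ κ ω L v :=
  le_dualSeminorm_mul hS hv hvc (weightedEnergyNorm_nonneg v) fun h => by
    simp [convectionFunctional,
      gradient_eq_zero_of_weightedEnergyNorm_eq_zero hκ hω hω0 hL0 hv hvc h]

theorem integral_inner_gradient_add_mul_le (hκ : 0 ≤ κ) (hω : Continuous ω) (hω0 : ∀ x, 0 ≤ ω x)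
    (hL : Continuous L) {r : E → ℝ} (hr : ∀ x, |r x| ≤ 2 * L x) {w v : E → ℝ}
    (hw : ContDiff ℝ 1 w) (hwc : HasCompactSupport w) (hv : ContDiff ℝ 1 v)
    (hvc : HasCompactSupport v) :
    ∫ x, (κ * ω x * ⟪gradient w x, gradient v x⟫ + r x * ω x * (w x * v x)) ∂μ
      ≤ 2 * weightedEnergyNorm μ κ ω L w * weightedEnergyNorm μ κ ω L v := by
  let energy (u : E → ℝ) (x : E) : ℝ := κ * ω x * ‖gradient u x‖ ^ 2 + L x * ω x * u x ^ 2
  have energy_nonneg (u : E → ℝ) (x : E) : 0 ≤ energy u x := by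
    have hL0 : 0 ≤ L x := by linarith [abs_nonneg (r x), hr x]
    have := hω0 x
    positivity
  have integrable_energy {u : E → ℝ} (hu : ContDiff ℝ 1 u) (huc : HasCompactSupport u) :
      Integrable (energy u) μ :=
    (integrable_mul_norm_gradient_sq hω hu huc).add (integrable_mul_sq hω hL hu.continuous huc)
  have norm_eq {u : E → ℝ} (hu : ContDiff ℝ 1 u) (huc : HasCompactSupport u) :
      weightedEnergyNorm μ κ ω L u = √(∫ x, energy u x ∂μ) := by
    rw [weightedEnergyNorm, ← integral_add (integrable_mul_norm_gradient_sq hω hu huc)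
      (integrable_mul_sq hω hL hu.continuous huc)]
  have pointwise (x : E) :
      (κ * ω x * ⟪gradient w x, gradient v x⟫ + r x * ω x * (w x * v x)) ^ 2
        ≤ (2 * energy w x) * (2 * energy v x) := by
    have hκω : |κ * ω x| ≤ 2 * (κ * ω x) := by
      have := mul_nonneg hκ (hω0 x)
      rw [abs_of_nonneg this]
      linarith
    have hrω : |r x * ω x| ≤ 2 * (L x * ω x) := by
      rw [abs_mul, abs_of_nonneg (hω0 x), ← mul_assoc]
      exact mul_le_mul_of_nonneg_right (hr x) (hω0 x)
    refine (sq_mul_inner_add_mul_le hκω hrω _ _ _ _).trans_eq ?_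
    ring
  have cauchy_schwarz := integral_le_sqrt_mul_sqrt_of_sq_le_mul
    ((integrable_energy hw hwc).const_mul 2) ((integrable_energy hv hvc).const_mul 2)
    (fun x => mul_nonneg zero_le_two (energy_nonneg w x))
    (fun x => mul_nonneg zero_le_two (energy_nonneg v x)) pointwise
  rw [integral_const_mul, integral_const_mul, Real.sqrt_mul zero_le_two,
    Real.sqrt_mul zero_le_two, ← norm_eq hw hwc, ← norm_eq hv hvc, mul_mul_mul_comm,
    Real.mul_self_sqrt zero_le_two, ← mul_assoc] at cauchy_schwarz
  exact cauchy_schwarz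

end WeightedEnergy

section ReactionForm

variable {d : ℕ} {κ : ℝ} {ω δ w v : EuclideanSpace ℝ (Fin d) → ℝ}
  {b c : EuclideanSpace ℝ (Fin d) → EuclideanSpace ℝ (Fin d)}

theorem reactionForm_weight_mul (hω : ContDiff ℝ 1 ω) (hb : ContDiff ℝ 1 b)
    (hbc : ∀ x, ω x • b x = ω x • c x + κ • gradient ω x) (hδ : Continuous δ)
    (hw : ContDiff ℝ 1 w) (hwc : HasCompactSupport w) (hv : ContDiff ℝ 1 v) :
    reactionForm volume κ c δ w (fun y => ω y * v y)
      = (∫ x, (κ * ω x * ⟪gradient w x, gradient v x⟫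
          + (δ x * ω x - vdiv (fun y => ω y • b y) x) * (w x * v x)))
        + convectionFunctional volume ω b w v := by
  have hF : ContDiff ℝ 1 (fun y => ω y • b y) := hω.smul hb
  have hωC := hω.continuous
  have hbC := hb.continuous
  have hwC := hw.continuous
  have hvC := hv.continuous
  have hdivC := continuous_vdiv hF
  have hgw := continuous_gradient_s10 hw
  have hgv := continuous_gradient_s10 hv
  have integrand_eq (x : EuclideanSpace ℝ (Fin d)) :
      κ * ⟪gradient w x, gradient (fun y => ω y * v y) x⟫ + ⟪c x, gradient w x⟫ * (ω x * v x)
          + δ x * w x * (ω x * v x)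
        = (κ * ω x * ⟪gradient w x, gradient v x⟫ + δ x * ω x * (w x * v x))
          + v x * ⟪ω x • b x, gradient w x⟫ := by
    rw [gradient_fun_mul_s10 (hω.differentiable one_ne_zero x) (hv.differentiable one_ne_zero x),
      hbc, inner_add_right, inner_add_left, real_inner_smul_right, real_inner_smul_right,
      real_inner_smul_left, real_inner_smul_left, real_inner_comm (gradient ω x)]
    ring
  have int_energy : Integrable fun x =>
      κ * ω x * ⟪gradient w x, gradient v x⟫ + δ x * ω x * (w x * v x) :=
    integrable_of_eq_zero_of_gradient_eq_zero hwc (by fun_prop) fun x hx hgx => by simp [hx, hgx]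
  have int_flux : Integrable fun x => v x * ⟪ω x • b x, gradient w x⟫ :=
    integrable_of_eq_zero_of_gradient_eq_zero hwc (by fun_prop) fun x _ hgx => by simp [hgx]
  have int_div : Integrable fun x => vdiv (fun y => ω y • b y) x * (w x * v x) :=
    integrable_of_eq_zero_of_gradient_eq_zero hwc (by fun_prop) fun x hx _ => by simp [hx]
  have flux_eq : ∫ x, w x * ⟪ω x • b x, gradient v x⟫ = -convectionFunctional volume ω b w v := by
    simp only [convectionFunctional, neg_neg, real_inner_smul_left, mul_left_comm, mul_assoc]
  simp_rw [reactionForm, integrand_eq, sub_mul, ← add_sub_assoc]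
  rw [integral_add int_energy int_flux, integral_sub int_energy int_div,
    integral_mul_inner_gradient_eq_neg hw hwc hv hF, flux_eq]
  ring

end ReactionForm

section ExponentialWeight

variable {d : ℕ}

/-- The effective reaction `E = α ∇η · b - div b` of the fitted convection field `b`; with the
weight `ω = exp (-α η)` it is characterised by `ω E = -div (ω b)`. -/
noncomputable def effectiveReaction (α : ℝ) (η : EuclideanSpace ℝ (Fin d) → ℝ)
    (b : EuclideanSpace ℝ (Fin d) → EuclideanSpace ℝ (Fin d)) (x : EuclideanSpace ℝ (Fin d)) : ℝ :=
  α * ⟪gradient η x, b x⟫ - vdiv b x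

variable {α κ : ℝ} {η : EuclideanSpace ℝ (Fin d) → ℝ}
  {b : EuclideanSpace ℝ (Fin d) → EuclideanSpace ℝ (Fin d)}

lemma continuous_effectiveReaction (hη : ContDiff ℝ 1 η) (hb : ContDiff ℝ 1 b) :
    Continuous (effectiveReaction α η b) := by
  have := continuous_gradient_s10 hη
  have := hb.continuous
  have := continuous_vdiv hb
  unfold effectiveReaction
  fun_prop

lemma vdiv_exp_neg_mul_smul {x : EuclideanSpace ℝ (Fin d)} (hη : DifferentiableAt ℝ η x)
    (hb : DifferentiableAt ℝ b x) :
    vdiv (fun y => Real.exp (-(α * η y)) • b y) x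
      = -(effectiveReaction α η b x * Real.exp (-(α * η x))) := by
  rw [vdiv_fun_smul (by fun_prop) hb, gradient_exp_neg_mul α hη, real_inner_smul_right,
    real_inner_comm, effectiveReaction]
  ring

theorem stmt10_general (hκ : 0 < κ) (hη : ContDiff ℝ 1 η) (hb : ContDiff ℝ 1 b)
    {c : EuclideanSpace ℝ (Fin d) → EuclideanSpace ℝ (Fin d)}
    (hbc : b = fun x => c x - (α * κ) • gradient η x)
    {δ : EuclideanSpace ℝ (Fin d) → ℝ} (hδ : Continuous δ)
    {ω : EuclideanSpace ℝ (Fin d) → ℝ} (hω : ω = fun x => Real.exp (-(α * η x)))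
    {L : EuclideanSpace ℝ (Fin d) → ℝ} (hL : Continuous L)
    (hδL : ∀ x, |δ x + effectiveReaction α η b x| ≤ 2 * L x)
    {w v : EuclideanSpace ℝ (Fin d) → ℝ} (hw : ContDiff ℝ 1 w) (hwc : HasCompactSupport w)
    (hv : ContDiff ℝ 1 v) (hvc : HasCompactSupport v)
    (hS : BddAbove (testQuotients (weightedEnergyNorm volume κ ω L)
      (convectionFunctional volume ω b w))) :
    reactionForm volume κ c δ w (fun y => ω y * v y)
      ≤ (2 * weightedEnergyNorm volume κ ω L w
          + dualSeminorm (weightedEnergyNorm volume κ ω L) (convectionFunctional volume ω b w))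
        * weightedEnergyNorm volume κ ω L v := by
  have hdη (x : EuclideanSpace ℝ (Fin d)) : DifferentiableAt ℝ η x :=
    hη.differentiable one_ne_zero x
  have hωC : ContDiff ℝ 1 ω := by rw [hω]; fun_prop
  have hω0 (x : EuclideanSpace ℝ (Fin d)) : 0 < ω x := by rw [hω]; exact Real.exp_pos _
  have hL0 (x : EuclideanSpace ℝ (Fin d)) : 0 ≤ L x := by
    linarith [abs_nonneg (δ x + effectiveReaction α η b x), hδL x]
  have flux_eq (x : EuclideanSpace ℝ (Fin d)) : ω x • b x = ω x • c x + κ • gradient ω x := by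
    rw [hω, gradient_exp_neg_mul α (hdη x), hbc]
    module
  have reaction_eq (x : EuclideanSpace ℝ (Fin d)) :
      δ x * ω x - vdiv (fun y => ω y • b y) x = (δ x + effectiveReaction α η b x) * ω x := by
    rw [hω, vdiv_exp_neg_mul_smul (hdη x) (hb.differentiable one_ne_zero x)]
    ring
  rw [reactionForm_weight_mul hωC hb flux_eq hδ hw hwc hv, add_mul]
  simp_rw [reaction_eq]
  exact add_le_add
    (integral_inner_gradient_add_mul_le hκ.le hωC.continuous (fun x => (hω0 x).le) hL hδL
      hw hwc hv hvc)
    (convectionFunctional_le hκ hωC.continuous hω0 hL0 hS hv hvc)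

end ExponentialWeight

lemma abs_add_le_two_mul_of_max_le {δ e : ℝ} (h : max 0 (-(2 * e)) ≤ δ) :
    |δ + e| ≤ 2 * (δ + e / 2) := by
  obtain ⟨h_zero, h_e⟩ := max_le_iff.1 h
  exact abs_le.2 ⟨by linarith, by linarith⟩

/-- Continuity estimate of Lemma 3.1 in its interior (compactly supported,
conforming) form with explicit constant `3`:
`a_reac(w, ωv) ≤ 3 (‖w‖_ω + s(w)) ‖v‖_ω`, where `‖·‖_ω` is the weighted energy
norm and `s` the dual seminorm of the fitted convective term. -/
theorem stmt10 {d : ℕ} (hd : 1 ≤ d) (α κ : ℝ) (hκ : 0 < κ)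
    (η : EuclideanSpace ℝ (Fin d) → ℝ) (hη : ContDiff ℝ 2 η)
    (c : EuclideanSpace ℝ (Fin d) → EuclideanSpace ℝ (Fin d)) (hc : ContDiff ℝ 1 c)
    (δ : EuclideanSpace ℝ (Fin d) → ℝ) (hδc : Continuous δ)
    (ω : EuclideanSpace ℝ (Fin d) → ℝ) (hω : ω = fun x => Real.exp (-(α * η x)))
    (b : EuclideanSpace ℝ (Fin d) → EuclideanSpace ℝ (Fin d))
    (hb : b = fun x => c x - (α * κ) • gradient η x)
    (Ef : EuclideanSpace ℝ (Fin d) → ℝ)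
    (hEf : Ef = fun x => α * ⟪gradient η x, b x⟫ - vdiv b x)
    (hδ : ∀ x, δ x ≥ max 0 (-(2 * Ef x)))
    (L : EuclideanSpace ℝ (Fin d) → ℝ) (hL : L = fun x => δ x + Ef x / 2)
    (Nω : (EuclideanSpace ℝ (Fin d) → ℝ) → ℝ)
    (hNω : Nω = fun u => Real.sqrt
      ((∫ x : EuclideanSpace ℝ (Fin d), κ * ω x * ‖gradient u x‖ ^ 2) +
        ∫ x : EuclideanSpace ℝ (Fin d), L x * ω x * u x ^ 2))
    (S : (EuclideanSpace ℝ (Fin d) → ℝ) → Set ℝ)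
    (hS : S = fun w => {r : ℝ | ∃ φ : EuclideanSpace ℝ (Fin d) → ℝ,
      ContDiff ℝ 1 φ ∧ HasCompactSupport φ ∧ Nω φ ≠ 0 ∧
      r = (-∫ x : EuclideanSpace ℝ (Fin d), ω x * w x * ⟪b x, gradient φ x⟫) / Nω φ})
    (s : (EuclideanSpace ℝ (Fin d) → ℝ) → ℝ) (hs : s = fun w => sSup (S w)) :
    ∀ w v : EuclideanSpace ℝ (Fin d) → ℝ,
      ContDiff ℝ 1 w → HasCompactSupport w → ContDiff ℝ 1 v → HasCompactSupport v →
      BddAbove (S w) →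
      (∫ x : EuclideanSpace ℝ (Fin d),
          (κ * ⟪gradient w x, gradient (fun y => ω y * v y) x⟫ +
            ⟪c x, gradient w x⟫ * (ω x * v x) + δ x * w x * ω x * v x)) ≤
        3 * (Nω w + s w) * Nω v := by
  intro w v hw hwc hv hvc hSw
  subst hs hS hNω hL hEf
  have hη1 : ContDiff ℝ 1 η := hη.of_le one_le_two
  have hbC : ContDiff ℝ 1 b := by
    rw [hb]
    exact hc.sub ((contDiff_gradient_s10 hη one_add_one_eq_two.le).const_smul _)
  have hLC := hδc.add ((continuous_effectiveReaction (α := α) hη1 hbC).div_const 2)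
  have bound := stmt10_general hκ hη1 hbC hb hδc hω hLC
    (fun x => abs_add_le_two_mul_of_max_le (hδ x)) hw hwc hv hvc hSw
  simp only [reactionForm, ← mul_assoc (δ _ * w _)] at bound
  refine bound.trans (mul_le_mul_of_nonneg_right ?_ (weightedEnergyNorm_nonneg v))
  rw [mul_add]
  exact add_le_add
    (mul_le_mul_of_nonneg_right (by norm_num) (weightedEnergyNorm_nonneg w))
    (le_mul_of_one_le_left
      (dualSeminorm_nonneg even_weightedEnergyNorm (odd_convectionFunctional b w)) (by norm_num))
end
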